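/- Let k ≥ r ≥ 0 and let D be a distribution over [0,1]^d × {±1} that puts all mass on positive labels y = +1. Then with probability 1−δ over an i.i.d. sample of size m, for every w ∈ ℝ_+^d with ‖w‖₁ ≤ k, the expected Winnow loss satisfies ℓ(w, D) ≤ ℓ̂(w) + C·sqrt(rk·(ln(d)·ln³(3m) + ln(1/δ))/m) for a universal constant C. -/

import Mathlib

open MeasureTheory

/-!
On a positive example the loss of `w` is `r - min r ⟨w, x⟩`, so only the truncated inner products
matter; the square of each lies in `[0, rk]`, hence the variance of the loss is at most `rk`.
Comparing the sample with an independent ghost sample (Chebyshev) and exchanging the two samples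
coordinatewise by fair coins reduces the theorem to bounding `∑ i, ε i * min r ⟨w, x i⟩` uniformly
in `w` for random signs `ε` and fixed points `x i`.

The numbers `⟨w, x i⟩` are the means of `k * x i j` under a subprobability on the coordinates `j`.
Replace that mean by the empirical mean of `n` independent draws (Maurey). Since
`z * (min r v - min r z) ^ 2 ≤ r * (v - z) ^ 2`, the truncated mean is approximated with mean
squared error of order `rk / n` rather than `k ^ 2 / n`. For `n = 2 ^ s` the empirical means take
at most `(d + 1) ^ 2 ^ s` values, so a union bound over increments between consecutive scales costs
`√(log d)` per scale, and about `log m` scales suffice.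
-/

section SubGaussianSum

open ProbabilityTheory

variable {Ω κ : Type*} [Fintype κ] {mΩ : MeasurableSpace Ω} {P : Measure Ω} {ε : κ → Ω → ℝ}

theorem measureReal_sqrt_lt_sum_mul_le (hind : iIndepFun ε P)
    (hsub : ∀ i, HasSubgaussianMGF (ε i) 1 P) (a : κ → ℝ) {c : ℝ} (hc : 0 ≤ c) :
    P.real {x | √(2 * c * ∑ i, a i ^ 2) < ∑ i, ε i x * a i} ≤ Real.exp (-c) := by
  have := hind.isProbabilityMeasure
  have hsum_nonneg : 0 ≤ ∑ i, a i ^ 2 := Finset.sum_nonneg fun i _ => sq_nonneg (a i)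
  rcases hsum_nonneg.eq_or_lt with hzero | hpos
  · have ha : ∀ i, a i = 0 := by
      simpa [Finset.sum_eq_zero_iff_of_nonneg, sq_nonneg] using hzero.symm
    simpa [ha] using Real.exp_nonneg (-c)
  · have hmul (i : κ) : HasSubgaussianMGF (fun x => ε i x * a i) (‖a i‖₊ ^ 2) P := by
      convert (hsub i).const_mul (a i) using 1
      · simp only [mul_comm]
      · exact NNReal.eq (by simp : ((‖a i‖₊ ^ 2 : NNReal) : ℝ) = a i ^ 2 * 1)
    have hind_mul : iIndepFun (fun i x => ε i x * a i) P :=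
      hind.comp (fun i u => u * a i) fun i => measurable_mul_const (a i)
    calc P.real {x | √(2 * c * ∑ i, a i ^ 2) < ∑ i, ε i x * a i}
        ≤ P.real {x | √(2 * c * ∑ i, a i ^ 2) ≤ ∑ i, ε i x * a i} :=
          measureReal_mono (Set.ofPred_subset_ofPred.2 fun _ => le_of_lt)
      _ ≤ Real.exp (-√(2 * c * ∑ i, a i ^ 2) ^ 2 / (2 * ∑ i, a i ^ 2)) := by
          simpa using HasSubgaussianMGF.measure_sum_ge_le_of_iIndepFun (s := Finset.univ) hind_mul
            (fun i _ => hmul i) (Real.sqrt_nonneg (2 * c * ∑ i, a i ^ 2))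
      _ = Real.exp (-c) := by
          rw [Real.sq_sqrt (by positivity)]
          congr 1
          field_simp

theorem measureReal_sqrt_lt_abs_sum_mul_le (hind : iIndepFun ε P)
    (hsub : ∀ i, HasSubgaussianMGF (ε i) 1 P) (a : κ → ℝ) {c : ℝ} (hc : 0 ≤ c) :
    P.real {x | √(2 * c * ∑ i, a i ^ 2) < |∑ i, ε i x * a i|} ≤ 2 * Real.exp (-c) := by
  have := hind.isProbabilityMeasure
  have hpos := measureReal_sqrt_lt_sum_mul_le hind hsub a hc
  have hneg := measureReal_sqrt_lt_sum_mul_le hind hsub (-a) hc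
  simp only [Pi.neg_apply, neg_sq, mul_neg, Finset.sum_neg_distrib] at hneg
  simp only [lt_abs, Set.ofPred_or]
  linarith [measureReal_union_le (μ := P) {x | √(2 * c * ∑ i, a i ^ 2) < ∑ i, ε i x * a i}
    {x | √(2 * c * ∑ i, a i ^ 2) < -∑ i, ε i x * a i}]

theorem measureReal_exists_sqrt_lt_abs_sum_mul_le (hind : iIndepFun ε P)
    (hsub : ∀ i, HasSubgaussianMGF (ε i) 1 P) (T : Finset (κ → ℝ)) {c : ℝ} (hc : 0 ≤ c) :
    P.real {x | ∃ a ∈ T, √(2 * c * ∑ i, a i ^ 2) < |∑ i, ε i x * a i|} ≤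
      T.card * (2 * Real.exp (-c)) := by
  have hunion : {x | ∃ a ∈ T, √(2 * c * ∑ i, a i ^ 2) < |∑ i, ε i x * a i|} =
      ⋃ a ∈ T, {x | √(2 * c * ∑ i, a i ^ 2) < |∑ i, ε i x * a i|} := by
    ext x
    simp
  calc P.real {x | ∃ a ∈ T, √(2 * c * ∑ i, a i ^ 2) < |∑ i, ε i x * a i|}
      ≤ ∑ a ∈ T, P.real {x | √(2 * c * ∑ i, a i ^ 2) < |∑ i, ε i x * a i|} :=
        hunion ▸ measureReal_biUnion_finset_le T _
    _ ≤ T.card * (2 * Real.exp (-c)) := by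
        simpa using Finset.sum_le_card_nsmul T _ _ fun a _ =>
          measureReal_sqrt_lt_abs_sum_mul_le hind hsub a hc

end SubGaussianSum

section EmpiricalMean

open ProbabilityTheory

variable {ι : Type*}

/-- Average of `y` over the first `n` entries of the sequence `ω`. For `n = 0` the division by zero
makes it `0`, which serves as the starting point of the chain of approximations. -/
noncomputable def empiricalMean (y : ι → ℝ) (n : ℕ) (ω : ℕ → ι) : ℝ :=
  (∑ j ∈ Finset.range n, y (ω j)) / n

theorem empiricalMean_mem_Icc {y : ι → ℝ} {k : ℝ} (hk : 0 ≤ k) (hy : ∀ j, y j ∈ Set.Icc 0 k)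
    (n : ℕ) (ω : ℕ → ι) : empiricalMean y n ω ∈ Set.Icc 0 k := by
  have hsum : ∑ j ∈ Finset.range n, y (ω j) ≤ n * k := by
    simpa using Finset.sum_le_card_nsmul (Finset.range n) _ k fun j _ => (hy (ω j)).2
  exact ⟨div_nonneg (Finset.sum_nonneg fun j _ => (hy (ω j)).1) n.cast_nonneg,
    div_le_of_le_mul₀ n.cast_nonneg hk (by linarith)⟩

variable [MeasurableSpace ι] {q : Measure ι} [IsProbabilityMeasure q] {y : ι → ℝ}

@[fun_prop]
theorem measurable_empiricalMean (hy : Measurable y) (n : ℕ) : Measurable (empiricalMean y n) := by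
  unfold empiricalMean
  fun_prop

theorem integral_empiricalMean (hy : Integrable y q) {n : ℕ} (hn : n ≠ 0) :
    ∫ ω, empiricalMean y n ω ∂Measure.infinitePi (fun _ => q) = ∫ j, y j ∂q := by
  have heval (j : ℕ) := measurePreserving_eval_infinitePi (fun _ : ℕ => q) j
  have hcoord (j : ℕ) : ∫ ω, y (ω j) ∂Measure.infinitePi (fun _ => q) = ∫ j, y j ∂q :=
    (heval j).hasLaw.integral_comp hy.aestronglyMeasurable
  have hint (j : ℕ) : Integrable (fun ω => y (ω j)) (Measure.infinitePi fun _ => q) :=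
    (heval j).integrable_comp_of_integrable hy
  simp only [empiricalMean, integral_div]
  rw [integral_finsetSum _ fun j _ => hint j]
  simp [hcoord, hn]

theorem variance_empiricalMean (hy : Measurable y) (hy_memLp : MemLp y 2 q) (n : ℕ) :
    Var[empiricalMean y n; Measure.infinitePi (fun _ => q)] = Var[y; q] / n := by
  have heval (j : ℕ) := measurePreserving_eval_infinitePi (fun _ : ℕ => q) j
  have hind : iIndepFun (fun j ω => y (ω j)) (Measure.infinitePi fun _ : ℕ => q) :=
    iIndepFun_infinitePi fun _ => hy
  have hmemLp (j : ℕ) : MemLp (fun ω => y (ω j)) 2 (Measure.infinitePi fun _ => q) :=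
    hy_memLp.comp_measurePreserving (heval j)
  have hsum : Var[∑ j ∈ Finset.range n, fun ω => y (ω j); Measure.infinitePi (fun _ => q)] =
      n * Var[y; q] := by
    rw [IndepFun.variance_sum (fun j _ => hmemLp j) fun i _ j _ hij => hind.indepFun hij]
    simp [fun j => (heval j).variance_fun_comp hy.aemeasurable]
  have hmean : empiricalMean y n =
      fun ω => (n : ℝ)⁻¹ * (∑ j ∈ Finset.range n, fun ω => y (ω j)) ω := by
    ext ω
    simp [empiricalMean, div_eq_inv_mul]
  rw [hmean, variance_const_mul, hsum]
  rcases eq_or_ne n 0 with rfl | hn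
  · simp
  · field_simp

theorem sq_min_sub_min_le (r u v : ℝ) : (min r u - min r v) ^ 2 ≤ (u - v) ^ 2 := by
  rw [sq_le_sq]
  simpa using abs_min_sub_min_le_max r u r v

theorem mul_sq_min_sub_min_le {r u v : ℝ} (hr : 0 ≤ r) (hu : 0 ≤ u) :
    v * (min r u - min r v) ^ 2 ≤ r * (u - v) ^ 2 := by
  rcases le_total v r with hvr | hrv
  · exact mul_le_mul hvr (sq_min_sub_min_le r u v) (sq_nonneg _) hr
  · rcases le_total r u with hru | hur
    · rw [min_eq_left hru, min_eq_left hrv, sub_self, zero_pow two_ne_zero, mul_zero]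
      positivity
    · rw [min_eq_right hur, min_eq_left hrv]
      nlinarith [mul_nonneg (sub_nonneg.2 hrv) (sub_nonneg.2 (mul_le_mul hur hur hu hr)),
        mul_le_mul_of_nonneg_left hrv hr]

theorem integral_sq_empiricalMean_sub_integral_le {k : ℝ} (hy : Measurable y)
    (hyk : ∀ j, y j ∈ Set.Icc 0 k) {n : ℕ} (hn : n ≠ 0) :
    ∫ ω, (empiricalMean y n ω - ∫ j, y j ∂q) ^ 2 ∂Measure.infinitePi (fun _ => q) ≤
      k * (∫ j, y j ∂q) / n := by
  have hyL2 : MemLp y 2 q := memLp_of_bounded (ae_of_all _ hyk) hy.aestronglyMeasurable 2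
  have hmean_nonneg : 0 ≤ ∫ j, y j ∂q := integral_nonneg fun j => (hyk j).1
  calc ∫ ω, (empiricalMean y n ω - ∫ j, y j ∂q) ^ 2 ∂Measure.infinitePi (fun _ => q)
      = Var[empiricalMean y n; Measure.infinitePi (fun _ => q)] := by
        rw [variance_eq_integral (measurable_empiricalMean hy n).aemeasurable,
          integral_empiricalMean (hyL2.integrable one_le_two) hn]
    _ = Var[y; q] / n := variance_empiricalMean hy hyL2 n
    _ ≤ (k - ∫ j, y j ∂q) * ((∫ j, y j ∂q) - 0) / n := by
        gcongr
        exact variance_le_sub_mul_sub (ae_of_all _ hyk) hy.aemeasurable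
    _ ≤ k * (∫ j, y j ∂q) / n := by
        gcongr ?_ / _
        nlinarith

theorem memLp_comp_empiricalMean {k : ℝ} (hk : 0 ≤ k) (hy : Measurable y)
    (hyk : ∀ j, y j ∈ Set.Icc 0 k) (n : ℕ) {g : ℝ → ℝ} (hg : Continuous g)
    (p : ENNReal) : MemLp (fun ω => g (empiricalMean y n ω)) p (Measure.infinitePi fun _ => q) := by
  obtain ⟨B, hB⟩ := isCompact_Icc.exists_bound_of_continuousOn hg.continuousOn
  exact .of_bound (hg.measurable.comp (measurable_empiricalMean hy n)).aestronglyMeasurable B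
    (ae_of_all _ fun ω => hB _ (empiricalMean_mem_Icc hk hyk n ω))

theorem integral_sq_min_empiricalMean_sub_le {r k : ℝ} (hr : 0 ≤ r) (hk : 0 ≤ k)
    (hy : Measurable y) (hyk : ∀ j, y j ∈ Set.Icc 0 k) {n : ℕ} (hn : n ≠ 0) :
    ∫ ω, (min r (empiricalMean y n ω) - min r (∫ j, y j ∂q)) ^ 2 ∂Measure.infinitePi (fun _ => q) ≤
      r * k / n := by
  set z := ∫ j, y j ∂q with hz
  have hvar := integral_sq_empiricalMean_sub_integral_le (q := q) hy hyk hn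
  rw [← hz] at hvar
  have hint_dev : Integrable (fun ω => (empiricalMean y n ω - z) ^ 2)
      (Measure.infinitePi fun _ => q) :=
    (memLp_comp_empiricalMean hk hy hyk n (g := fun u => (u - z) ^ 2) (by fun_prop) 1).integrable
      le_rfl
  have hint_min : Integrable (fun ω => (min r (empiricalMean y n ω) - min r z) ^ 2)
      (Measure.infinitePi fun _ => q) :=
    (memLp_comp_empiricalMean hk hy hyk n (g := fun u => (min r u - min r z) ^ 2)
      (by fun_prop) 1).integrable le_rfl
  have hz_nonneg : 0 ≤ z := integral_nonneg fun j => (hyk j).1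
  rcases hz_nonneg.eq_or_lt with hz_zero | hz_pos
  · calc ∫ ω, (min r (empiricalMean y n ω) - min r z) ^ 2 ∂Measure.infinitePi (fun _ => q)
        ≤ ∫ ω, (empiricalMean y n ω - z) ^ 2 ∂Measure.infinitePi (fun _ => q) :=
          integral_mono hint_min hint_dev fun ω => sq_min_sub_min_le r _ z
      _ ≤ r * k / n := hvar.trans (by rw [← hz_zero, mul_zero, zero_div]; positivity)
  · refine le_of_mul_le_mul_left ?_ hz_pos
    calc z * ∫ ω, (min r (empiricalMean y n ω) - min r z) ^ 2 ∂Measure.infinitePi (fun _ => q)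
        ≤ r * ∫ ω, (empiricalMean y n ω - z) ^ 2 ∂Measure.infinitePi (fun _ => q) := by
          rw [← integral_const_mul, ← integral_const_mul]
          exact integral_mono (hint_min.const_mul z) (hint_dev.const_mul r) fun ω =>
            mul_sq_min_sub_min_le hr (empiricalMean_mem_Icc hk hyk n ω).1
      _ ≤ r * (k * z / n) := by gcongr
      _ = z * (r * k / n) := by ring

theorem integral_sq_min_empiricalMean_sub_le_two_mul {r k : ℝ} (hr : 0 ≤ r) (hk : 0 ≤ k)
    (hy : Measurable y) (hyk : ∀ j, y j ∈ Set.Icc 0 k) (n : ℕ) :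
    ∫ ω, (min r (empiricalMean y n ω) - min r (∫ j, y j ∂q)) ^ 2 ∂Measure.infinitePi (fun _ => q) ≤
      2 * (r * k) / (n + 1) := by
  rcases eq_or_ne n 0 with rfl | hn
  · have hz_nonneg : 0 ≤ ∫ j, y j ∂q := integral_nonneg fun j => (hyk j).1
    have hzk : ∫ j, y j ∂q ≤ k := by
      simpa using integral_mono_of_nonneg (ae_of_all _ fun j => (hyk j).1) (integrable_const k)
        (ae_of_all q fun j => (hyk j).2)
    have hsq : min r (∫ j, y j ∂q) ^ 2 ≤ r * k := by
      rw [sq]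
      exact mul_le_mul (min_le_left _ _) ((min_le_right _ _).trans hzk) (le_min hr hz_nonneg) hr
    simp only [empiricalMean, Finset.range_zero, Finset.sum_empty, zero_div, min_eq_right hr,
      zero_sub, neg_sq, integral_const, probReal_univ, one_smul, Nat.cast_zero, zero_add, div_one]
    linarith [mul_nonneg hr hk]
  · refine (integral_sq_min_empiricalMean_sub_le hr hk hy hyk hn).trans ?_
    rw [div_le_div_iff₀ (by positivity) (by positivity)]
    have hn_one : (1 : ℝ) ≤ n := mod_cast Nat.one_le_iff_ne_zero.2 hn
    nlinarith [mul_nonneg hr hk]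

end EmpiricalMean

section Chaining

open ProbabilityTheory

variable {Ω κ : Type*} {mΩ : MeasurableSpace Ω} {Q : Measure Ω}

theorem memLp_two_sqrt {Y : Ω → ℝ} (hY : Integrable Y Q) (hY_nonneg : 0 ≤ Y) :
    MemLp (fun ω => √(Y ω)) 2 Q := by
  have hmeas : AEStronglyMeasurable (fun ω => √(Y ω)) Q :=
    Real.continuous_sqrt.comp_aestronglyMeasurable hY.aestronglyMeasurable
  refine (memLp_two_iff_integrable_sq hmeas).2 ?_
  simpa only [Real.sq_sqrt (hY_nonneg _)] using hY

variable [IsProbabilityMeasure Q]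

theorem integral_sqrt_le_sqrt_integral {Y : Ω → ℝ} (hY : Integrable Y Q) (hY_nonneg : 0 ≤ Y) :
    ∫ ω, √(Y ω) ∂Q ≤ √(∫ ω, Y ω ∂Q) := by
  refine Real.le_sqrt_of_sq_le ?_
  have hvar := variance_nonneg (fun ω => √(Y ω)) Q
  rw [variance_eq_sub (memLp_two_sqrt hY hY_nonneg)] at hvar
  simpa only [Pi.pow_apply, Real.sq_sqrt (hY_nonneg _), sub_nonneg] using hvar

variable {X : ℕ → Ω → κ → ℝ} {z e : κ → ℝ} {c : ℕ → ℝ} {S : ℕ} {V : ℝ}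

theorem integral_sq_increment_le (hX : ∀ s i, MemLp (fun ω => X s ω i) 2 Q)
    (hV : ∀ s i, ∫ ω, (X s ω i - z i) ^ 2 ∂Q ≤ V / 2 ^ s) (s : ℕ) (i : κ) :
    ∫ ω, (X (s + 1) ω i - X s ω i) ^ 2 ∂Q ≤ 3 * V / 2 ^ s := by
  have hint (t : ℕ) : Integrable (fun ω => 2 * (X t ω i - z i) ^ 2) Q :=
    ((hX t i).sub (memLp_const (z i))).integrable_sq.const_mul 2
  calc ∫ ω, (X (s + 1) ω i - X s ω i) ^ 2 ∂Q
      ≤ ∫ ω, (2 * (X (s + 1) ω i - z i) ^ 2 + 2 * (X s ω i - z i) ^ 2) ∂Q := by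
        refine integral_mono ((hX (s + 1) i).sub (hX s i)).integrable_sq
          ((hint (s + 1)).add (hint s)) fun ω => ?_
        simp only
        nlinarith [sq_nonneg ((X (s + 1) ω i - z i) + (X s ω i - z i))]
    _ ≤ 2 * (V / 2 ^ (s + 1)) + 2 * (V / 2 ^ s) := by
        rw [integral_add (hint (s + 1)) (hint s), integral_const_mul, integral_const_mul]
        linarith [hV (s + 1) i, hV s i]
    _ = 3 * V / 2 ^ s := by
        field_simp
        ring

variable [Fintype κ]

theorem integrable_sqrt_mul_sum_sq {Y : Ω → κ → ℝ} (hY : ∀ i, MemLp (fun ω => Y ω i) 2 Q)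
    {b : ℝ} (hb : 0 ≤ b) : Integrable (fun ω => √(b * ∑ i, Y ω i ^ 2)) Q := by
  refine MemLp.integrable one_le_two (memLp_two_sqrt ?_ fun ω => ?_)
  · exact (integrable_finsetSum _ fun i _ => (hY i).integrable_sq).const_mul b
  · positivity

theorem integral_sqrt_mul_sum_sq_le {Y : Ω → κ → ℝ} (hY : ∀ i, MemLp (fun ω => Y ω i) 2 Q)
    {b v : ℝ} (hb : 0 ≤ b) (hv : ∀ i, ∫ ω, Y ω i ^ 2 ∂Q ≤ v) :
    ∫ ω, √(b * ∑ i, Y ω i ^ 2) ∂Q ≤ √(b * (Fintype.card κ * v)) := by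
  have hint (i : κ) : Integrable (fun ω => Y ω i ^ 2) Q := (hY i).integrable_sq
  refine (integral_sqrt_le_sqrt_integral ((integrable_finsetSum _ fun i _ => hint i).const_mul b)
    fun ω => by positivity).trans (Real.sqrt_le_sqrt ?_)
  rw [integral_const_mul, integral_finsetSum _ fun i _ => hint i]
  gcongr
  simpa using Finset.sum_le_card_nsmul Finset.univ (fun i => ∫ ω, Y ω i ^ 2 ∂Q) v fun i _ => hv i

theorem abs_sum_mul_le_sqrt_card_mul_sum_sq (he : ∀ i, |e i| ≤ 1) (u : κ → ℝ) :
    |∑ i, e i * u i| ≤ √(Fintype.card κ * ∑ i, u i ^ 2) := by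
  refine Real.abs_le_sqrt ?_
  calc (∑ i, e i * u i) ^ 2 ≤ (∑ i, e i ^ 2) * ∑ i, u i ^ 2 :=
        Finset.sum_mul_sq_le_sq_mul_sq _ _ _
    _ ≤ Fintype.card κ * ∑ i, u i ^ 2 := by
        gcongr
        simpa using Finset.sum_le_card_nsmul Finset.univ (fun i => e i ^ 2) 1 fun i _ =>
          (sq_le_one_iff_abs_le_one _).2 (he i)

theorem abs_sum_mul_le_of_abs_sum_mul_increment_le (h0 : ∀ ω, X 0 ω = 0) (he : ∀ i, |e i| ≤ 1)
    {ω : Ω} (hinc : ∀ s < S, |∑ i, e i * (X (s + 1) ω i - X s ω i)| ≤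
      √(2 * c s * ∑ i, (X (s + 1) ω i - X s ω i) ^ 2)) :
    |∑ i, e i * z i| ≤ ∑ s ∈ Finset.range S, √(2 * c s * ∑ i, (X (s + 1) ω i - X s ω i) ^ 2) +
      √(Fintype.card κ * ∑ i, (X S ω i - z i) ^ 2) := by
  have htelescope : ∑ i, e i * z i =
      ∑ s ∈ Finset.range S, ∑ i, e i * (X (s + 1) ω i - X s ω i) -
        ∑ i, e i * (X S ω i - z i) := by
    rw [Finset.sum_comm, ← Finset.sum_sub_distrib]
    refine Finset.sum_congr rfl fun i _ => ?_
    rw [← Finset.mul_sum, Finset.sum_range_sub (fun s => X s ω i), h0, Pi.zero_apply]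
    ring
  rw [htelescope]
  refine (abs_sub _ _).trans (add_le_add ((Finset.abs_sum_le_sum_abs _ _).trans ?_)
    (abs_sum_mul_le_sqrt_card_mul_sum_sq he _))
  exact Finset.sum_le_sum fun s hs => hinc s (Finset.mem_range.1 hs)

theorem abs_sum_mul_le_chaining (h0 : ∀ ω, X 0 ω = 0)
    (hX : ∀ s i, MemLp (fun ω => X s ω i) 2 Q)
    (hV : ∀ s i, ∫ ω, (X s ω i - z i) ^ 2 ∂Q ≤ V / 2 ^ s) (he : ∀ i, |e i| ≤ 1)
    (hc : ∀ s, 0 ≤ c s)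
    (hinc : ∀ s < S, ∀ ω, |∑ i, e i * (X (s + 1) ω i - X s ω i)| ≤
      √(2 * c s * ∑ i, (X (s + 1) ω i - X s ω i) ^ 2)) :
    |∑ i, e i * z i| ≤
      ∑ s ∈ Finset.range S, √(2 * c s * (Fintype.card κ * (3 * V / 2 ^ s))) +
        √(Fintype.card κ * (Fintype.card κ * (V / 2 ^ S))) := by
  have hX_inc (s : ℕ) (i : κ) : MemLp (fun ω => X (s + 1) ω i - X s ω i) 2 Q :=
    (hX (s + 1) i).sub (hX s i)
  have hX_dev (i : κ) : MemLp (fun ω => X S ω i - z i) 2 Q := (hX S i).sub (memLp_const (z i))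
  have hsqrt_inc (s : ℕ) : Integrable
      (fun ω => √(2 * c s * ∑ i, (X (s + 1) ω i - X s ω i) ^ 2)) Q :=
    integrable_sqrt_mul_sum_sq (hX_inc s) (by linarith [hc s])
  have hsqrt_dev : Integrable (fun ω => √(Fintype.card κ * ∑ i, (X S ω i - z i) ^ 2)) Q :=
    integrable_sqrt_mul_sum_sq hX_dev (Nat.cast_nonneg _)
  calc |∑ i, e i * z i|
      = ∫ _, |∑ i, e i * z i| ∂Q := by simp
    _ ≤ ∫ ω, (∑ s ∈ Finset.range S, √(2 * c s * ∑ i, (X (s + 1) ω i - X s ω i) ^ 2) +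
          √(Fintype.card κ * ∑ i, (X S ω i - z i) ^ 2)) ∂Q :=
        integral_mono (integrable_const _)
          ((integrable_finsetSum _ fun s _ => hsqrt_inc s).add hsqrt_dev) fun ω =>
          abs_sum_mul_le_of_abs_sum_mul_increment_le h0 he fun s hs => hinc s hs ω
    _ ≤ _ := by
        rw [integral_add (integrable_finsetSum _ fun s _ => hsqrt_inc s) hsqrt_dev,
          integral_finsetSum _ fun s _ => hsqrt_inc s]
        gcongr with s
        · exact integral_sqrt_mul_sum_sq_le (hX_inc s) (by linarith [hc s])
            (integral_sq_increment_le hX hV s)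
        · exact integral_sqrt_mul_sum_sq_le hX_dev (Nat.cast_nonneg _) (hV S)

end Chaining

section TruncatedMixture

open ProbabilityTheory

theorem exists_finset_card_le_forall_mem_of_dependsOn {α β ι : Type*} [Finite ι] [Nonempty β]
    {f : (α → ι) → β} {s : Finset α} (hf : DependsOn f s) :
    ∃ T : Finset β, T.card ≤ Nat.card ι ^ s.card ∧ ∀ ω, f ω ∈ T := by
  classical
  have := Fintype.ofFinite ι
  obtain ⟨g, rfl⟩ := dependsOn_iff_exists_comp.1 hf
  refine ⟨Finset.univ.image g, Finset.card_image_le.trans_eq ?_, fun ω =>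
    Finset.mem_image_of_mem g (Finset.mem_univ _)⟩
  rw [Finset.card_univ, ← Nat.card_eq_fintype_card, Nat.card_fun]
  simp

variable {ι κ : Type*}

/-- The point `(min r (y i average))ᵢ` of the chain at level `s`, obtained from `2 ^ s - 1` samples
so that level `0` is the zero vector. -/
noncomputable def truncatedMean (r : ℝ) (y : κ → ι → ℝ) (s : ℕ) (ω : ℕ → ι) : κ → ℝ :=
  fun i => min r (empiricalMean (y i) (2 ^ s - 1) ω)

variable {r k : ℝ} {y : κ → ι → ℝ}

theorem truncatedMean_zero (hr : 0 ≤ r) (ω : ℕ → ι) : truncatedMean r y 0 ω = 0 := by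
  ext i
  simp [truncatedMean, empiricalMean, hr]

theorem dependsOn_truncatedMean (s : ℕ) :
    DependsOn (truncatedMean r y s) (Finset.range (2 ^ s)) := by
  intro ω ω' h
  ext i
  simp only [truncatedMean, empiricalMean]
  congr 2
  refine Finset.sum_congr rfl fun j hj => ?_
  rw [h j (Finset.range_subset_range.2 (Nat.sub_le _ _) hj)]

theorem dependsOn_truncatedMean_increment (s : ℕ) :
    DependsOn (fun ω => truncatedMean r y (s + 1) ω - truncatedMean r y s ω)
      (Finset.range (2 ^ (s + 1))) := by
  intro ω ω' h
  have hle : 2 ^ s ≤ 2 ^ (s + 1) := Nat.pow_le_pow_right two_pos s.le_succ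
  simp only
  rw [dependsOn_truncatedMean (s + 1) h, dependsOn_truncatedMean s fun j hj =>
    h j (Finset.range_subset_range.2 hle hj)]

section

variable [MeasurableSpace ι] {q : Measure ι} [IsProbabilityMeasure q]

theorem memLp_truncatedMean (hk : 0 ≤ k) (hy : ∀ i, Measurable (y i))
    (hyk : ∀ i j, y i j ∈ Set.Icc 0 k) (s : ℕ) (i : κ) :
    MemLp (fun ω => truncatedMean r y s ω i) 2 (Measure.infinitePi fun _ => q) := by
  simpa only [truncatedMean] using
    memLp_comp_empiricalMean hk (hy i) (hyk i) _ (g := fun u => min r u) (by fun_prop) 2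

theorem integral_sq_truncatedMean_sub_le (hr : 0 ≤ r) (hk : 0 ≤ k) (hy : ∀ i, Measurable (y i))
    (hyk : ∀ i j, y i j ∈ Set.Icc 0 k) (s : ℕ) (i : κ) :
    ∫ ω, (truncatedMean r y s ω i - min r (∫ j, y i j ∂q)) ^ 2 ∂Measure.infinitePi (fun _ => q) ≤
      2 * (r * k) / 2 ^ s := by
  simpa [truncatedMean] using
    integral_sq_min_empiricalMean_sub_le_two_mul (q := q) hr hk (hy i) (hyk i) (2 ^ s - 1)

end

/-- Exponent of the tail bound used at level `s`: it pays for the at most `N ^ 2 ^ (s + 1)` values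
of the increment, leaving failure probability `η / 2 ^ (s + 1)`. -/
noncomputable def levelExponent (N : ℕ) (η : ℝ) (s : ℕ) : ℝ :=
  2 ^ (s + 1) * Real.log (2 * N) + Real.log (2 / η)

section LevelExponent

variable {N : ℕ} {η : ℝ}

theorem levelExponent_nonneg (hN : N ≠ 0) (hη : 0 < η) (hη_le : η ≤ 1) (s : ℕ) :
    0 ≤ levelExponent N η s := by
  have hN_one : (1 : ℝ) ≤ N := mod_cast Nat.one_le_iff_ne_zero.2 hN
  have hlogN : 0 ≤ Real.log (2 * N) := Real.log_nonneg (by linarith)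
  have hlogη : 0 ≤ Real.log (2 / η) := Real.log_nonneg ((le_div_iff₀ hη).2 (by linarith))
  unfold levelExponent
  positivity

theorem pow_mul_two_mul_exp_neg_levelExponent_le (hN : N ≠ 0) (hη : 0 < η) (s : ℕ) :
    (N : ℝ) ^ 2 ^ (s + 1) * (2 * Real.exp (-levelExponent N η s)) ≤ η * (1 / 2) ^ (s + 1) := by
  have hexp : Real.exp (-levelExponent N η s) = (1 / (2 * N)) ^ 2 ^ (s + 1) * (η / 2) := by
    rw [levelExponent, neg_add, Real.exp_add, ← Real.log_inv, inv_div,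
      Real.exp_log (by positivity), ← mul_neg, ← Real.log_inv, ← one_div,
      ← Real.exp_log (show 0 < 1 / (2 * (N : ℝ)) by positivity), ← Real.exp_nat_mul]
    simp
  calc (N : ℝ) ^ 2 ^ (s + 1) * (2 * Real.exp (-levelExponent N η s))
      = η * (1 / 2) ^ 2 ^ (s + 1) := by
        rw [hexp, div_pow, div_pow, mul_pow, one_pow]
        field_simp
    _ ≤ η * (1 / 2) ^ (s + 1) := by
        refine mul_le_mul_of_nonneg_left ?_ hη.le
        exact pow_le_pow_of_le_one (by norm_num) (by norm_num) (s + 1).lt_two_pow_self.le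

theorem sqrt_two_mul_levelExponent_mul_le (hN : N ≠ 0) (hη : 0 < η) (hη_le : η ≤ 1) {b : ℝ}
    (hb : 0 ≤ b) (s : ℕ) :
    √(2 * levelExponent N η s * (6 * b / 2 ^ s)) ≤
      √b * (5 * √(Real.log (2 * N)) + 4 * √(Real.log (2 / η)) * (3 / 4) ^ s) := by
  set L := Real.log (2 * N)
  set l := Real.log (2 / η)
  have hN_one : (1 : ℝ) ≤ N := mod_cast Nat.one_le_iff_ne_zero.2 hN
  have hL : 0 ≤ L := Real.log_nonneg (by linarith)
  have hl : 0 ≤ l := Real.log_nonneg ((le_div_iff₀ hη).2 (by linarith))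
  have hpow : (1 / 2 : ℝ) ^ s ≤ ((3 / 4) ^ s) ^ 2 := by
    rw [← pow_mul, mul_comm s 2, pow_mul]
    gcongr
    norm_num
  calc √(2 * levelExponent N η s * (6 * b / 2 ^ s))
      = √(b * (24 * L + 12 * l * (1 / 2) ^ s)) := by
        congr 1
        rw [levelExponent, one_div, inv_pow]
        field_simp
        ring
    _ ≤ √(b * (5 * √L + 4 * √l * (3 / 4) ^ s) ^ 2) := by
        refine Real.sqrt_le_sqrt (mul_le_mul_of_nonneg_left ?_ hb)
        have hcross : 0 ≤ √L * (√l * (3 / 4) ^ s) := by positivity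
        nlinarith [Real.sq_sqrt hL, Real.sq_sqrt hl, mul_le_mul_of_nonneg_left hpow hl]
    _ = √b * (5 * √L + 4 * √l * (3 / 4) ^ s) := by
        rw [Real.sqrt_mul hb, Real.sqrt_sq (by positivity)]

theorem sum_sqrt_two_mul_levelExponent_mul_le (hN : N ≠ 0) (hη : 0 < η) (hη_le : η ≤ 1) {b : ℝ}
    (hb : 0 ≤ b) (S : ℕ) :
    ∑ s ∈ Finset.range S, √(2 * levelExponent N η s * (6 * b / 2 ^ s)) ≤
      √b * (5 * S * √(Real.log (2 * N)) + 16 * √(Real.log (2 / η))) := by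
  have hgeom : ∑ s ∈ Finset.range S, (3 / 4 : ℝ) ^ s ≤ 4 := by
    rw [geom_sum_eq (by norm_num), div_le_iff_of_neg (by norm_num)]
    have : (0 : ℝ) ≤ (3 / 4) ^ S := by positivity
    linarith
  calc ∑ s ∈ Finset.range S, √(2 * levelExponent N η s * (6 * b / 2 ^ s))
      ≤ ∑ s ∈ Finset.range S,
          √b * (5 * √(Real.log (2 * N)) + 4 * √(Real.log (2 / η)) * (3 / 4) ^ s) :=
        Finset.sum_le_sum fun s _ => sqrt_two_mul_levelExponent_mul_le hN hη hη_le hb s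
    _ = √b * (5 * S * √(Real.log (2 * N)) +
          4 * √(Real.log (2 / η)) * ∑ s ∈ Finset.range S, (3 / 4 : ℝ) ^ s) := by
        rw [← Finset.mul_sum, Finset.sum_add_distrib, Finset.sum_const, Finset.card_range,
          nsmul_eq_mul, ← Finset.mul_sum]
        ring
    _ ≤ √b * (5 * S * √(Real.log (2 * N)) + 4 * √(Real.log (2 / η)) * 4) := by gcongr
    _ = √b * (5 * S * √(Real.log (2 * N)) + 16 * √(Real.log (2 / η))) := by ring

end LevelExponent

section UniformBound

variable {Ω : Type*} {mΩ : MeasurableSpace Ω} {P : Measure Ω} {ε : κ → Ω → ℝ} [Fintype κ]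

theorem measureReal_exists_sqrt_lt_abs_sum_mul_increment_le [Finite ι] (hind : iIndepFun ε P)
    (hsub : ∀ i, HasSubgaussianMGF (ε i) 1 P) {c : ℝ} (hc : 0 ≤ c) (s : ℕ) :
    P.real {x | ∃ ω, √(2 * c * ∑ i, (truncatedMean r y (s + 1) ω i - truncatedMean r y s ω i) ^ 2) <
      |∑ i, ε i x * (truncatedMean r y (s + 1) ω i - truncatedMean r y s ω i)|} ≤
      (Nat.card ι : ℝ) ^ 2 ^ (s + 1) * (2 * Real.exp (-c)) := by
  have := hind.isProbabilityMeasure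
  obtain ⟨T, hT_card, hT_mem⟩ := exists_finset_card_le_forall_mem_of_dependsOn
    (dependsOn_truncatedMean_increment (r := r) (y := y) s)
  rw [Finset.card_range] at hT_card
  calc P.real {x | ∃ ω,
          √(2 * c * ∑ i, (truncatedMean r y (s + 1) ω i - truncatedMean r y s ω i) ^ 2) <
          |∑ i, ε i x * (truncatedMean r y (s + 1) ω i - truncatedMean r y s ω i)|}
      ≤ P.real {x | ∃ a ∈ T, √(2 * c * ∑ i, a i ^ 2) < |∑ i, ε i x * a i|} :=
        measureReal_mono fun x ⟨ω, hω⟩ => ⟨_, hT_mem ω, hω⟩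
    _ ≤ T.card * (2 * Real.exp (-c)) := measureReal_exists_sqrt_lt_abs_sum_mul_le hind hsub T hc
    _ ≤ (Nat.card ι : ℝ) ^ 2 ^ (s + 1) * (2 * Real.exp (-c)) := by
        gcongr
        exact_mod_cast hT_card

theorem abs_sum_mul_min_integral_le [MeasurableSpace ι] {N : ℕ} {e : κ → ℝ} {S : ℕ} {η : ℝ}
    (hN : N ≠ 0) (hr : 0 ≤ r) (hk : 0 ≤ k) (hy : ∀ i, Measurable (y i))
    (hyk : ∀ i j, y i j ∈ Set.Icc 0 k) (he : ∀ i, |e i| ≤ 1)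
    (hη : 0 < η) (hη_le : η ≤ 1) (hS : Fintype.card κ ≤ 2 ^ S)
    (hinc : ∀ s < S, ∀ ω, |∑ i, e i * (truncatedMean r y (s + 1) ω i - truncatedMean r y s ω i)| ≤
      √(2 * levelExponent N η s *
        ∑ i, (truncatedMean r y (s + 1) ω i - truncatedMean r y s ω i) ^ 2))
    (q : Measure ι) [IsProbabilityMeasure q] :
    |∑ i, e i * min r (∫ j, y i j ∂q)| ≤ √(Fintype.card κ * (r * k)) *
      (5 * S * √(Real.log (2 * N)) + 16 * √(Real.log (2 / η)) + 2) := by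
  have hS_real : (Fintype.card κ : ℝ) ≤ 2 ^ S := mod_cast hS
  refine (abs_sum_mul_le_chaining (truncatedMean_zero hr) (memLp_truncatedMean (q := q) hk hy hyk)
    (integral_sq_truncatedMean_sub_le hr hk hy hyk) he (levelExponent_nonneg hN hη hη_le)
    hinc).trans ?_
  rw [mul_add]
  refine add_le_add ?_ ?_
  · refine (Finset.sum_congr rfl fun s _ => ?_).trans_le
      (sum_sqrt_two_mul_levelExponent_mul_le hN hη hη_le
        (show 0 ≤ Fintype.card κ * (r * k) by positivity) S)
    congr 1
    ring
  · refine Real.sqrt_le_iff.2 ⟨by positivity, ?_⟩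
    rw [mul_pow, Real.sq_sqrt (by positivity)]
    have hratio : Fintype.card κ / (2 : ℝ) ^ S ≤ 1 := (div_le_one₀ (by positivity)).2 hS_real
    have hb : 0 ≤ Fintype.card κ * (r * k) := by positivity
    calc (Fintype.card κ : ℝ) * (Fintype.card κ * (2 * (r * k) / 2 ^ S))
        = 2 * (Fintype.card κ * (r * k)) * (Fintype.card κ / 2 ^ S) := by ring
      _ ≤ 2 * (Fintype.card κ * (r * k)) * 1 := by gcongr
      _ ≤ Fintype.card κ * (r * k) * 2 ^ 2 := by linarith

theorem measureReal_exists_lt_abs_sum_min_integral_le [Finite ι] [Nonempty ι] [MeasurableSpace ι]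
    [MeasurableSingletonClass ι] (hind : iIndepFun ε P)
    (hsub : ∀ i, HasSubgaussianMGF (ε i) 1 P) (hε : ∀ i x, |ε i x| ≤ 1)
    (hr : 0 ≤ r) (hk : 0 ≤ k) (hyk : ∀ i j, y i j ∈ Set.Icc 0 k) {η : ℝ} (hη : 0 < η)
    (hη_le : η ≤ 1) {S : ℕ} (hS : Fintype.card κ ≤ 2 ^ S) :
    P.real {x | ∃ q : ProbabilityMeasure ι, √(Fintype.card κ * (r * k)) *
      (5 * S * √(Real.log (2 * Nat.card ι)) + 16 * √(Real.log (2 / η)) + 2) <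
        |∑ i, ε i x * min r (∫ j, y i j ∂q)|} ≤ η := by
  have := hind.isProbabilityMeasure
  have hN : Nat.card ι ≠ 0 := Nat.card_ne_zero.2 ⟨‹_›, ‹_›⟩
  set E : ℕ → Set Ω := fun s => {x | ∃ ω, √(2 * levelExponent (Nat.card ι) η s *
      ∑ i, (truncatedMean r y (s + 1) ω i - truncatedMean r y s ω i) ^ 2) <
    |∑ i, ε i x * (truncatedMean r y (s + 1) ω i - truncatedMean r y s ω i)|}
  have hE (s : ℕ) : P.real (E s) ≤ η * (1 / 2) ^ (s + 1) :=
    (measureReal_exists_sqrt_lt_abs_sum_mul_increment_le hind hsub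
      (levelExponent_nonneg hN hη hη_le s) s).trans
        (pow_mul_two_mul_exp_neg_levelExponent_le hN hη s)
  have hgeom : ∑ s ∈ Finset.range S, (1 / 2 : ℝ) ^ (s + 1) ≤ 1 := by
    simp_rw [pow_succ', ← Finset.mul_sum]
    linarith [sum_geometric_two_le S]
  calc P.real {x | ∃ q : ProbabilityMeasure ι, √(Fintype.card κ * (r * k)) *
        (5 * S * √(Real.log (2 * Nat.card ι)) + 16 * √(Real.log (2 / η)) + 2) <
          |∑ i, ε i x * min r (∫ j, y i j ∂q)|}
      ≤ P.real (⋃ s ∈ Finset.range S, E s) := by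
        refine measureReal_mono (fun x ⟨q, hq⟩ => ?_) (measure_ne_top P _)
        by_contra hx
        simp only [E, Set.mem_iUnion, Finset.mem_range, not_exists] at hx
        exact hq.not_ge (abs_sum_mul_min_integral_le hN hr hk (fun i => measurable_of_finite _) hyk
          (fun i => hε i x) hη hη_le hS (fun s hs ω => not_lt.1 fun h => hx s hs ⟨ω, h⟩) q)
    _ ≤ ∑ s ∈ Finset.range S, P.real (E s) := measureReal_biUnion_finset_le _ _
    _ ≤ ∑ s ∈ Finset.range S, η * (1 / 2) ^ (s + 1) := Finset.sum_le_sum fun s _ => hE s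
    _ ≤ η := by
        rw [← Finset.mul_sum]
        exact mul_le_of_le_one_right hη.le hgeom

end UniformBound

end TruncatedMixture

section NonnegativeWeights

open ProbabilityTheory

variable {α κ Ω : Type*} [Fintype α]

theorem exists_probabilityMeasure_forall_integral_eq [MeasurableSpace (Option α)]
    [MeasurableSingletonClass (Option α)] {p : α → ℝ} (hp : ∀ j, 0 ≤ p j) (hp_sum : ∑ j, p j ≤ 1) :
    ∃ q : ProbabilityMeasure (Option α), ∀ y : Option α → ℝ, y none = 0 →
      ∫ o, y o ∂q = ∑ j, p j * y (some j) := by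
  have hmass : ∑ o : Option α,
      o.elim (ENNReal.ofReal (1 - ∑ j, p j)) (fun j => .ofReal (p j)) = 1 := by
    rw [Fintype.sum_option]
    simp only [Option.elim_none, Option.elim_some]
    rw [← ENNReal.ofReal_sum_of_nonneg fun j _ => hp j, ← ENNReal.ofReal_add (sub_nonneg.2 hp_sum)
      (Finset.sum_nonneg fun j _ => hp j), sub_add_cancel, ENNReal.ofReal_one]
  refine ⟨⟨(PMF.ofFintype _ hmass).toMeasure, inferInstance⟩, fun y hy => ?_⟩
  rw [ProbabilityMeasure.coe_mk, PMF.integral_eq_sum, Fintype.sum_option]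
  simp [hy, hp]

variable (α) in
/-- The weight vectors with nonnegative entries and total mass, which is their `ℓ¹` norm, at most
`k`. -/
def nonnegWeights (k : ℝ) : Set (α → ℝ) := {w | (∀ j, 0 ≤ w j) ∧ ∑ j, w j ≤ k}

theorem measureReal_exists_lt_abs_sum_min_sum_mul_le [Fintype κ] {mΩ : MeasurableSpace Ω}
    {P : Measure Ω} {ε : κ → Ω → ℝ} (hind : iIndepFun ε P)
    (hsub : ∀ i, HasSubgaussianMGF (ε i) 1 P) (hε : ∀ i x, |ε i x| ≤ 1) {r k : ℝ}
    (hr : 0 ≤ r) (hk : 0 ≤ k) {a : κ → α → ℝ} (ha : ∀ i j, a i j ∈ Set.Icc 0 1) {η : ℝ}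
    (hη : 0 < η) (hη_le : η ≤ 1) {S : ℕ} (hS : Fintype.card κ ≤ 2 ^ S) :
    P.real {x | ∃ w ∈ nonnegWeights α k, √(Fintype.card κ * (r * k)) *
      (5 * S * √(Real.log (2 * (Fintype.card α + 1))) + 16 * √(Real.log (2 / η)) + 2) <
        |∑ i, ε i x * min r (∑ j, w j * a i j)|} ≤ η := by
  have := hind.isProbabilityMeasure
  let _ : MeasurableSpace (Option α) := ⊤
  have hyk (i : κ) (o : Option α) : o.elim 0 (fun j => k * a i j) ∈ Set.Icc 0 k := by
    cases o with
    | none => exact ⟨le_rfl, hk⟩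
    | some j => exact ⟨mul_nonneg hk (ha i j).1, mul_le_of_le_one_right hk (ha i j).2⟩
  have hcore := measureReal_exists_lt_abs_sum_min_integral_le hind hsub hε hr hk hyk hη hη_le hS
  rw [Finite.card_option, Nat.card_eq_fintype_card, Nat.cast_succ] at hcore
  refine (measureReal_mono ?_ (measure_ne_top P _)).trans hcore
  rintro x ⟨w, ⟨hw, hwk⟩, hx⟩
  obtain ⟨q, hq⟩ := exists_probabilityMeasure_forall_integral_eq (p := fun j => w j / k)
    (fun j => div_nonneg (hw j) hk) (by
      rw [← Finset.sum_div]
      exact div_le_one_of_le₀ hwk hk)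
  have hq_int (i : κ) : ∫ o, o.elim 0 (fun j => k * a i j) ∂(q : Measure (Option α)) =
      ∑ j, w j * a i j := by
    rw [hq _ rfl]
    refine Finset.sum_congr rfl fun j _ => ?_
    have hw_zero (hk_zero : k = 0) : w j = 0 :=
      le_antisymm (((Finset.single_le_sum (fun l _ => hw l) (Finset.mem_univ j)).trans hwk).trans_eq
        hk_zero) (hw j)
    rw [Option.elim_some, ← mul_assoc, div_mul_cancel_of_imp hw_zero]
  exact ⟨q, by simpa only [hq_int] using hx⟩

theorem measureReal_exists_lt_sum_mul_min_sub_min_le [Fintype κ] {mΩ : MeasurableSpace Ω}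
    {P : Measure Ω} {ε : κ → Ω → ℝ} (hind : iIndepFun ε P)
    (hsub : ∀ i, HasSubgaussianMGF (ε i) 1 P) (hε : ∀ i x, |ε i x| ≤ 1) {r k : ℝ}
    (hr : 0 ≤ r) (hk : 0 ≤ k) {a b : κ → α → ℝ} (ha : ∀ i j, a i j ∈ Set.Icc 0 1)
    (hb : ∀ i j, b i j ∈ Set.Icc 0 1) {η : ℝ} (hη : 0 < η) (hη_le : η ≤ 1) {S : ℕ}
    (hS : Fintype.card κ ≤ 2 ^ S) :
    P.real {x | ∃ w ∈ nonnegWeights α k, 2 * (√(Fintype.card κ * (r * k)) *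
      (5 * S * √(Real.log (2 * (Fintype.card α + 1))) + 16 * √(Real.log (2 / η)) + 2)) <
        ∑ i, ε i x * (min r (∑ j, w j * a i j) - min r (∑ j, w j * b i j))} ≤ 2 * η := by
  have := hind.isProbabilityMeasure
  set t := √(Fintype.card κ * (r * k)) *
    (5 * S * √(Real.log (2 * (Fintype.card α + 1))) + 16 * √(Real.log (2 / η)) + 2)
  have hbad (c : κ → α → ℝ) (hc : ∀ i j, c i j ∈ Set.Icc 0 1) :
      P.real {x | ∃ w ∈ nonnegWeights α k, t < |∑ i, ε i x * min r (∑ j, w j * c i j)|} ≤ η :=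
    measureReal_exists_lt_abs_sum_min_sum_mul_le hind hsub hε hr hk hc hη hη_le hS
  have hcover : {x | ∃ w ∈ nonnegWeights α k, 2 * t <
        ∑ i, ε i x * (min r (∑ j, w j * a i j) - min r (∑ j, w j * b i j))} ⊆
      {x | ∃ w ∈ nonnegWeights α k, t < |∑ i, ε i x * min r (∑ j, w j * a i j)|} ∪
        {x | ∃ w ∈ nonnegWeights α k, t < |∑ i, ε i x * min r (∑ j, w j * b i j)|} := by
    rintro x ⟨w, hw, hx⟩
    simp only [mul_sub, Finset.sum_sub_distrib] at hx
    by_contra hnot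
    simp only [Set.mem_union, Set.mem_ofPred_eq, not_or, not_exists, not_and, not_lt] at hnot
    linarith [le_of_abs_le (hnot.1 w hw), neg_le_of_abs_le (hnot.2 w hw)]
  calc _ ≤ _ := measureReal_mono hcover (measure_ne_top P _)
    _ ≤ _ := measureReal_union_le _ _
    _ ≤ η + η := add_le_add (hbad a ha) (hbad b hb)
    _ = 2 * η := (two_mul η).symm

end NonnegativeWeights

section RandomSigns

open ProbabilityTheory

/-- The sign `±1` encoded by a Boolean. -/
def rademacherSign (b : Bool) : ℝ := bif b then 1 else -1

theorem abs_rademacherSign (b : Bool) : |rademacherSign b| = 1 := by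
  cases b <;> simp [rademacherSign]

variable (κ : Type*) [Fintype κ]

/-- The law of a family of independent fair coins indexed by `κ`. -/
noncomputable def fairCoins : Measure (κ → Bool) := Measure.pi fun _ => uniformOn Set.univ

instance : IsProbabilityMeasure (fairCoins κ) :=
  inferInstanceAs (IsProbabilityMeasure (Measure.pi _))

theorem iIndepFun_rademacherSign :
    iIndepFun (fun i (σ : κ → Bool) => rademacherSign (σ i)) (fairCoins κ) :=
  iIndepFun_pi fun _ => (measurable_of_finite rademacherSign).aemeasurable

variable {κ}

theorem hasSubgaussianMGF_rademacherSign (i : κ) :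
    HasSubgaussianMGF (fun σ : κ → Bool => rademacherSign (σ i)) 1 (fairCoins κ) := by
  have hsign : HasSubgaussianMGF rademacherSign 1 (uniformOn Set.univ) := by
    have hmean : ∫ b, rademacherSign b ∂uniformOn (Set.univ : Set Bool) = 0 := by
      rw [integral_fintype .of_finite]
      simp only [measureReal_def, uniformOn_univ]
      simp [rademacherSign]
    have hbound (b : Bool) : rademacherSign b ∈ Set.Icc (-1) 1 :=
      abs_le.1 (abs_rademacherSign b).le
    convert hasSubgaussianMGF_of_mem_Icc_of_integral_eq_zero
      (measurable_of_finite _).aemeasurable (ae_of_all _ hbound) hmean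
    rw [← NNReal.coe_inj]
    norm_num
  refine HasSubgaussianMGF.of_map (X := rademacherSign) (Y := fun σ : κ → Bool => σ i)
    (measurable_pi_apply i).aemeasurable ?_
  rwa [fairCoins, (measurePreserving_eval _ i).map_eq]

end RandomSigns

section Symmetrization

open ProbabilityTheory

variable {κ Z : Type*}

/-- Exchanges the two entries of the `i`-th pair of `z` whenever `σ i` is `false`. -/
def swapBy (σ : κ → Bool) (z : κ → Z × Z) (i : κ) : Z × Z := bif σ i then z i else (z i).swap

theorem sub_swapBy (f : Z → ℝ) (σ : κ → Bool) (z : κ → Z × Z) (i : κ) :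
    f (swapBy σ z i).2 - f (swapBy σ z i).1 = rademacherSign (σ i) * (f (z i).2 - f (z i).1) := by
  cases h : σ i <;> simp [swapBy, rademacherSign, h]

variable [Fintype κ] [MeasurableSpace Z] {D : Measure Z} [IsProbabilityMeasure D]

theorem ae_pi_forall {P : Z → Prop} (h : ∀ᵐ p ∂D, P p) :
    ∀ᵐ S ∂Measure.pi (fun _ : κ => D), ∀ i, P (S i) :=
  ae_all_iff.2 fun i => (measurePreserving_eval _ i).quasiMeasurePreserving.ae h

theorem measurePreserving_swapBy (σ : κ → Bool) :
    MeasurePreserving (swapBy σ) (Measure.pi fun _ : κ => D.prod D)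
      (Measure.pi fun _ : κ => D.prod D) := by
  refine measurePreserving_pi (f := fun i (p : Z × Z) => bif σ i then p else p.swap) _ _ fun i => ?_
  cases σ i
  · exact Measure.measurePreserving_swap
  · exact MeasurePreserving.id _

theorem measure_le_of_forall_measurePreserving {α β : Type*} [MeasurableSpace α] [Countable α]
    [MeasurableSingletonClass α] [MeasurableSpace β] {ρ : Measure α} [IsProbabilityMeasure ρ]
    {ν : Measure β} [IsProbabilityMeasure ν] {T : α → β → β}
    (hT : ∀ a, MeasurePreserving (T a) ν ν) {B : Set β} (hB : MeasurableSet B) {η : ENNReal}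
    (h : ∀ᵐ z ∂ν, ρ {a | T a z ∈ B} ≤ η) : ν B ≤ η := by
  have hpre : MeasurableSet {p : α × β | T p.1 p.2 ∈ B} :=
    measurable_from_prod_countable_right (f := fun p : α × β => T p.1 p.2)
      (fun a => (hT a).measurable) hB
  calc ν B = ∫⁻ a, ν (T a ⁻¹' B) ∂ρ := by
        simp [(hT _).measure_preimage hB.nullMeasurableSet]
    _ = (ρ.prod ν) {p | T p.1 p.2 ∈ B} := (Measure.prod_apply hpre).symm
    _ = ∫⁻ z, ρ {a | T a z ∈ B} ∂ν := Measure.prod_apply_symm hpre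
    _ ≤ ∫⁻ _, η ∂ν := lintegral_mono_ae h
    _ = η := by simp

theorem one_sub_measure_compl_le {Ω : Type*} [MeasurableSpace Ω] {μ : Measure Ω}
    [IsProbabilityMeasure μ] (s : Set Ω) : 1 - μ sᶜ ≤ μ s := by
  simpa using le_measure_sdiff (μ := μ) (s₁ := Set.univ) (s₂ := sᶜ)

theorem half_le_measure_pi_lt_sum [Nonempty κ] {f : Z → ℝ} (hf : MemLp f 2 D) {c : ℝ} (hc : 0 < c)
    (hvar : 2 * Var[f; D] ≤ Fintype.card κ * c ^ 2) :
    1 / 2 ≤ (Measure.pi fun _ : κ => D)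
      {S | Fintype.card κ * (∫ p, f p ∂D) - Fintype.card κ * c < ∑ i, f (S i)} := by
  set μ := Measure.pi fun _ : κ => D
  set X : (κ → Z) → ℝ := ∑ i, fun S => f (S i)
  have hn : (0 : ℝ) < Fintype.card κ := mod_cast Fintype.card_pos
  have heval (i : κ) : MemLp (fun S : κ → Z => f (S i)) 2 μ :=
    hf.comp_measurePreserving (measurePreserving_eval _ i)
  have hmean : ∫ S, X S ∂μ = Fintype.card κ * ∫ p, f p ∂D := by
    simp only [X, Finset.sum_apply]
    rw [integral_finsetSum _ fun i _ => (heval i).integrable one_le_two]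
    simp [μ, integral_comp_eval (μ := fun _ : κ => D) hf.aestronglyMeasurable]
  have hX : MemLp X 2 μ := memLp_finsetSum' _ fun i _ => heval i
  have hdev : μ {S | Fintype.card κ * c ≤ |X S - ∫ S, X S ∂μ|} ≤ ENNReal.ofReal (1 / 2) := by
    refine (meas_ge_le_variance_div_sq hX (mul_pos hn hc)).trans (ENNReal.ofReal_le_ofReal ?_)
    rw [variance_sum_pi fun _ => hf, Finset.sum_const, Finset.card_univ, nsmul_eq_mul,
      div_le_iff₀ (by positivity)]
    nlinarith
  have hcompl : {S | Fintype.card κ * (∫ p, f p ∂D) - Fintype.card κ * c < ∑ i, f (S i)}ᶜ ⊆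
      {S | Fintype.card κ * c ≤ |X S - ∫ S, X S ∂μ|} := by
    intro S hS
    rw [Set.mem_compl_iff, Set.mem_ofPred_eq, not_lt] at hS
    rw [Set.mem_ofPred_eq, hmean, le_abs']
    simp only [X, Finset.sum_apply]
    left
    linarith
  calc (1 / 2 : ENNReal) = 1 - ENNReal.ofReal (1 / 2) := by
        rw [ENNReal.ofReal_div_of_pos two_pos]
        simp
    _ ≤ 1 - μ {S | Fintype.card κ * (∫ p, f p ∂D) - Fintype.card κ * c < ∑ i, f (S i)}ᶜ :=
        tsub_le_tsub_left ((measure_mono hcompl).trans hdev) 1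
    _ ≤ _ := one_sub_measure_compl_le _

theorem measure_le_two_mul_prod {Ω : Type*} [MeasurableSpace Ω] {μ : Measure Ω}
    [IsProbabilityMeasure μ] {B : Set (Ω × Ω)} (hB : MeasurableSet B) {A : Set Ω}
    (h : ∀ S ∈ A, 1 / 2 ≤ μ {S' | (S, S') ∈ B}) : μ A ≤ 2 * (μ.prod μ) B := by
  calc μ A ≤ μ {S | 1 / 2 ≤ μ {S' | (S, S') ∈ B}} := measure_mono h
    _ = 2 * (1 / 2 * μ {S | 1 / 2 ≤ μ {S' | (S, S') ∈ B}}) := by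
        rw [← mul_assoc, ENNReal.mul_div_cancel two_ne_zero ENNReal.ofNat_ne_top, one_mul]
    _ ≤ 2 * ∫⁻ S, μ {S' | (S, S') ∈ B} ∂μ := by
        gcongr
        exact mul_meas_ge_le_lintegral (measurable_measure_prodMk_left hB) _
    _ = 2 * (μ.prod μ) B := by rw [Measure.prod_apply hB]; rfl

theorem measure_exists_sum_div_add_lt_integral_le [Nonempty κ] {ι : Type*} {W : Set ι}
    {f : ι → Z → ℝ} {v t : ℝ} {η : ENNReal} (hf : ∀ w ∈ W, MemLp (f w) 2 D)
    (hvar : ∀ w ∈ W, Var[f w; D] ≤ v) (ht : 0 < t) (hvt : 8 * v ≤ Fintype.card κ * t ^ 2)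
    (hmeas : MeasurableSet {z : κ → Z × Z |
      ∃ w ∈ W, Fintype.card κ * (t / 2) < ∑ i, (f w (z i).2 - f w (z i).1)})
    (hsign : ∀ᵐ z ∂Measure.pi (fun _ : κ => D.prod D),
      fairCoins κ {σ | ∃ w ∈ W, Fintype.card κ * (t / 2) <
        ∑ i, rademacherSign (σ i) * (f w (z i).2 - f w (z i).1)} ≤ η) :
    (Measure.pi fun _ : κ => D)
      {S | ∃ w ∈ W, (∑ i, f w (S i)) / Fintype.card κ + t < ∫ p, f w p ∂D} ≤ 2 * η := by
  set μ := Measure.pi fun _ : κ => D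
  set B := {z : κ → Z × Z |
    ∃ w ∈ W, Fintype.card κ * (t / 2) < ∑ i, (f w (z i).2 - f w (z i).1)}
  have hn : (0 : ℝ) < Fintype.card κ := mod_cast Fintype.card_pos
  have hunzip := (measurePreserving_arrowProdEquivProdArrow Z Z κ (fun _ => D) (fun _ => D)).symm
  have hB : Measure.pi (fun _ : κ => D.prod D) B ≤ η := by
    refine measure_le_of_forall_measurePreserving (ρ := fairCoins κ) measurePreserving_swapBy
      hmeas ?_
    simpa only [B, Set.mem_ofPred_eq, sub_swapBy] using hsign
  rw [← hunzip.measure_preimage hmeas.nullMeasurableSet] at hB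
  refine (measure_le_two_mul_prod (hunzip.measurable hmeas) ?_).trans (mul_le_mul_right hB 2)
  rintro S ⟨w, hw, hS⟩
  refine (half_le_measure_pi_lt_sum (hf w hw) (half_pos ht) ?_).trans
    (measure_mono fun S' hS' => ⟨w, hw, ?_⟩)
  · linarith [hvar w hw]
  · change _ < ∑ i, (f w (S' i) - f w (S i))
    rw [Set.mem_ofPred_eq] at hS'
    rw [div_add' _ _ _ hn.ne', div_lt_iff₀ hn] at hS
    rw [Finset.sum_sub_distrib]
    linarith

end Symmetrization

section DeviationConstants

theorem one_le_log_three_mul {n : ℕ} (hn : n ≠ 0) : 1 ≤ Real.log (3 * n) := by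
  have hn_one : (1 : ℝ) ≤ n := mod_cast Nat.one_le_iff_ne_zero.2 hn
  rw [Real.le_log_iff_exp_le (by positivity)]
  linarith [Real.exp_one_lt_d9]

theorem natLog_two_add_one_le {n : ℕ} (hn : n ≠ 0) :
    (Nat.log 2 n : ℝ) + 1 ≤ 2 * Real.log (3 * n) := by
  have hlog : (Nat.log 2 n : ℝ) * Real.log 2 ≤ Real.log n := by
    rw [← le_div_iff₀ (Real.log_pos one_lt_two), Real.log_div_log]
    exact_mod_cast Real.natLog_le_logb n 2
  have hlog_three := one_le_log_three_mul one_ne_zero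
  rw [Nat.cast_one, mul_one] at hlog_three
  rw [Real.log_mul three_ne_zero (by positivity)]
  nlinarith [Real.log_two_gt_d9, (Nat.log 2 n).cast_nonneg (α := ℝ)]

theorem log_two_mul_add_one_le {d : ℕ} (hd : 1 < d) :
    Real.log (2 * (d + 1)) ≤ 3 * Real.log d := by
  have hd_two : (2 : ℝ) ≤ d := mod_cast hd
  calc Real.log (2 * (d + 1)) ≤ Real.log (d ^ 3) :=
        Real.log_le_log (by positivity) (by nlinarith [mul_self_nonneg ((d : ℝ) - 2)])
    _ = 3 * Real.log d := by rw [Real.log_pow, Nat.cast_ofNat]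

theorem log_eight_div_le {d : ℕ} (hd : 1 < d) {δ : ℝ} (hδ : 0 < δ) :
    Real.log (8 / δ) ≤ 3 * Real.log d + Real.log (1 / δ) := by
  have hlog_two : Real.log 2 ≤ Real.log d := Real.log_le_log two_pos (mod_cast hd)
  have hlog_eight : Real.log 8 = 3 * Real.log 2 := by
    rw [← Nat.cast_ofNat (R := ℝ) (n := 3), ← Real.log_pow]
    norm_num
  rw [Real.log_div (by norm_num) hδ.ne', one_div, Real.log_inv]
  linarith

theorem half_le_log_mul_log_pow_add_log {d n : ℕ} (hd : 1 < d) (hn : n ≠ 0) {δ : ℝ}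
    (hδ : δ ∈ Set.Ioo (0 : ℝ) 1) :
    1 / 2 ≤ Real.log d * Real.log (3 * n) ^ 3 + Real.log (1 / δ) := by
  have hlogd : Real.log 2 ≤ Real.log d := Real.log_le_log two_pos (mod_cast hd)
  have hlogn : 1 ≤ Real.log (3 * n) ^ 3 := one_le_pow₀ (one_le_log_three_mul hn)
  have hlogδ : 0 ≤ Real.log (1 / δ) := Real.log_nonneg ((one_le_div₀ hδ.1).2 hδ.2.le)
  nlinarith [Real.log_two_gt_d9]

theorem deviation_constants_le {d n : ℕ} (hd : 1 < d) (hn : n ≠ 0) {δ : ℝ}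
    (hδ : δ ∈ Set.Ioo (0 : ℝ) 1) :
    5 * ((Nat.log 2 n : ℝ) + 1) * √(Real.log (2 * (d + 1))) + 16 * √(Real.log (8 / δ)) + 2 ≤
      50 * √(Real.log d * Real.log (3 * n) ^ 3 + Real.log (1 / δ)) := by
  set l := Real.log (3 * n)
  set Q := Real.log d * l ^ 3 + Real.log (1 / δ)
  have hl : 1 ≤ l := one_le_log_three_mul hn
  have hlogd : 0 ≤ Real.log d := Real.log_natCast_nonneg d
  have hlogδ : 0 ≤ Real.log (1 / δ) := Real.log_nonneg ((one_le_div₀ hδ.1).2 hδ.2.le)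
  have hlogd_le : Real.log d ≤ Real.log d * l ^ 3 :=
    le_mul_of_one_le_right hlogd (one_le_pow₀ hl)
  have hQ : 1 / 2 ≤ Q := half_le_log_mul_log_pow_add_log hd hn hδ
  have hlevels : ((Nat.log 2 n : ℝ) + 1) * √(Real.log (2 * (d + 1))) ≤ 7 / 2 * √Q := by
    have hd_log : 0 ≤ Real.log (2 * (d + 1)) :=
      Real.log_nonneg (by linarith [d.cast_nonneg (α := ℝ)])
    rw [← sq_le_sq₀ (by positivity) (by positivity), mul_pow, mul_pow, Real.sq_sqrt hd_log,
      Real.sq_sqrt (by linarith)]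
    calc ((Nat.log 2 n : ℝ) + 1) ^ 2 * Real.log (2 * (d + 1))
        ≤ (2 * l) ^ 2 * (3 * Real.log d) := by
          gcongr
          · exact natLog_two_add_one_le hn
          · exact log_two_mul_add_one_le hd
      _ = 12 * (Real.log d * l ^ 2) := by ring
      _ ≤ 12 * (Real.log d * l ^ 3) := by gcongr; linarith
      _ ≤ (7 / 2) ^ 2 * Q := by linarith
  have hfailure : √(Real.log (8 / δ)) ≤ 7 / 4 * √Q := by
    refine (Real.sqrt_le_left (by positivity)).2 ?_
    rw [mul_pow, Real.sq_sqrt (by linarith)]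
    linarith [log_eight_div_le hd hδ.1]
  have hone : 2 ≤ 3 * √Q := by
    rw [← sq_le_sq₀ two_pos.le (by positivity), mul_pow, Real.sq_sqrt (by linarith)]
    linarith
  linarith

theorem mul_sqrt_div_self {x : ℝ} (hx : 0 ≤ x) (a : ℝ) : x * √(a / x) = √(x * a) := by
  rcases hx.eq_or_lt with rfl | hx_pos
  · simp
  · nth_rw 1 [← Real.sqrt_sq hx]
    rw [← Real.sqrt_mul (sq_nonneg x)]
    congr 1
    field_simp

end DeviationConstants

section Winnow

open ProbabilityTheory

variable {α κ : Type*} [Fintype α] {r k : ℝ} {w : α → ℝ} {p : (α → ℝ) × ℝ}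

/-- The loss `[1/2 - y (⟨w, x⟩ - θ)]₊` of the weights `w` on the labelled example `p = (x, y)`. -/
noncomputable def winnowLoss (θ : ℝ) (w : α → ℝ) (p : (α → ℝ) × ℝ) : ℝ :=
  max 0 (1 / 2 - p.2 * ((∑ j, w j * p.1 j) - θ))

@[fun_prop]
theorem continuous_winnowLoss (θ : ℝ) (w : α → ℝ) : Continuous (winnowLoss θ w) := by
  unfold winnowLoss
  fun_prop

/-- A labelled example of the support allowed for the data: a point of the unit cube with label
`+1`. -/
def IsPositiveExample (p : (α → ℝ) × ℝ) : Prop := p.2 = 1 ∧ ∀ j, p.1 j ∈ Set.Icc (0 : ℝ) 1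

theorem winnowLoss_eq_sub_min (r : ℝ) (w : α → ℝ) (hp : p.2 = 1) :
    winnowLoss (r - 1 / 2) w p = r - min r (∑ j, w j * p.1 j) := by
  rw [winnowLoss, hp, ← max_sub_sub_left, sub_self]
  ring_nf

theorem sum_mul_mem_Icc (hw : w ∈ nonnegWeights α k) {x : α → ℝ} (hx : ∀ j, x j ∈ Set.Icc 0 1) :
    ∑ j, w j * x j ∈ Set.Icc 0 k :=
  ⟨Finset.sum_nonneg fun j _ => mul_nonneg (hw.1 j) (hx j).1,
    (Finset.sum_le_sum fun j _ => mul_le_of_le_one_right (hw.1 j) (hx j).2).trans hw.2⟩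

theorem sq_sub_winnowLoss_le (hr : 0 ≤ r) (hw : w ∈ nonnegWeights α k) (hp : IsPositiveExample p) :
    (winnowLoss (r - 1 / 2) w p - r) ^ 2 ≤ r * k := by
  obtain ⟨hu_nonneg, hu_le⟩ := sum_mul_mem_Icc hw hp.2
  rw [winnowLoss_eq_sub_min r w hp.1, sub_sub_cancel_left, neg_sq, sq]
  exact mul_le_mul (min_le_left _ _) ((min_le_right _ _).trans hu_le) (le_min hr hu_nonneg) hr

variable {D : Measure ((α → ℝ) × ℝ)} [IsProbabilityMeasure D]

theorem memLp_winnowLoss (hr : 0 ≤ r) (hD : ∀ᵐ p ∂D, IsPositiveExample p)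
    (hw : w ∈ nonnegWeights α k) : MemLp (winnowLoss (r - 1 / 2) w) 2 D := by
  refine MemLp.of_bound (by fun_prop) (|r| + √(r * k)) (hD.mono fun p hp => ?_)
  have hdist := Real.abs_le_sqrt (sq_sub_winnowLoss_le hr hw hp)
  rw [Real.norm_eq_abs]
  linarith [abs_sub_abs_le_abs_sub (winnowLoss (r - 1 / 2) w p) r]

theorem variance_winnowLoss_le (hr : 0 ≤ r) (hD : ∀ᵐ p ∂D, IsPositiveExample p)
    (hw : w ∈ nonnegWeights α k) : Var[winnowLoss (r - 1 / 2) w; D] ≤ r * k := by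
  have hmeas : AEStronglyMeasurable (winnowLoss (r - 1 / 2) w) D := by fun_prop
  calc Var[winnowLoss (r - 1 / 2) w; D]
      = Var[fun p => winnowLoss (r - 1 / 2) w p - r; D] := (variance_sub_const hmeas r).symm
    _ ≤ ∫ p, (winnowLoss (r - 1 / 2) w p - r) ^ 2 ∂D :=
        variance_le_expectation_sq (by fun_prop)
    _ ≤ ∫ _, r * k ∂D :=
        integral_mono_of_nonneg (ae_of_all _ fun _ => sq_nonneg _) (integrable_const _)
          (hD.mono fun p hp => sq_sub_winnowLoss_le hr hw hp)
    _ = r * k := by simp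

variable [Fintype κ]

theorem ae_forall_winnowLoss_le_of_mul_eq_zero [Nonempty κ] (hr : 0 ≤ r) (hrk : r * k = 0)
    (hD : ∀ᵐ p ∂D, IsPositiveExample p) :
    ∀ᵐ S ∂Measure.pi (fun _ : κ => D), ∀ w ∈ nonnegWeights α k,
      ∫ p, winnowLoss (r - 1 / 2) w p ∂D ≤
        (∑ i, winnowLoss (r - 1 / 2) w (S i)) / Fintype.card κ := by
  have hloss {w : α → ℝ} (hw : w ∈ nonnegWeights α k) {p : (α → ℝ) × ℝ}
      (hp : IsPositiveExample p) : winnowLoss (r - 1 / 2) w p = r :=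
    sub_eq_zero.1 (pow_eq_zero_iff two_ne_zero |>.1
      (le_antisymm ((sq_sub_winnowLoss_le hr hw hp).trans_eq hrk) (sq_nonneg _)))
  filter_upwards [ae_pi_forall hD] with S hS w hw
  rw [integral_congr_ae (hD.mono fun p hp => hloss hw hp),
    Finset.sum_congr rfl fun i _ => hloss hw (hS i)]
  simp

theorem measurableSet_exists_lt_sum_winnowLoss_sub (θ t : ℝ) (W : Set (α → ℝ)) :
    MeasurableSet {z : κ → ((α → ℝ) × ℝ) × ((α → ℝ) × ℝ) |
      ∃ w ∈ W, t < ∑ i, (winnowLoss θ w (z i).2 - winnowLoss θ w (z i).1)} := by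
  have hopen : IsOpen (⋃ w ∈ W, {z : κ → ((α → ℝ) × ℝ) × ((α → ℝ) × ℝ) |
      t < ∑ i, (winnowLoss θ w (z i).2 - winnowLoss θ w (z i).1)}) :=
    isOpen_biUnion fun w _ => isOpen_lt (by fun_prop) (by fun_prop)
  convert hopen.measurableSet
  ext z
  simp

theorem fairCoins_exists_lt_sum_winnowLoss_sub_le [Nontrivial α] [Nonempty κ] (hr : 0 ≤ r)
    (hk : 0 ≤ k) {δ : ℝ} (hδ : δ ∈ Set.Ioo (0 : ℝ) 1)
    {z : κ → ((α → ℝ) × ℝ) × ((α → ℝ) × ℝ)}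
    (hz : ∀ i, IsPositiveExample (z i).1 ∧ IsPositiveExample (z i).2) :
    fairCoins κ {σ | ∃ w ∈ nonnegWeights α k, 100 * (√(Fintype.card κ * (r * k)) *
      √(Real.log (Fintype.card α) * Real.log (3 * Fintype.card κ) ^ 3 + Real.log (1 / δ))) <
        ∑ i, rademacherSign (σ i) *
          (winnowLoss (r - 1 / 2) w (z i).2 - winnowLoss (r - 1 / 2) w (z i).1)} ≤
      ENNReal.ofReal (δ / 2) := by
  have hconst := deviation_constants_le (Fintype.one_lt_card (α := α))
    (Fintype.card_ne_zero (α := κ)) hδ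
  have hS : Fintype.card κ ≤ 2 ^ (Nat.log 2 (Fintype.card κ) + 1) :=
    (Nat.lt_pow_succ_log_self one_lt_two _).le
  have hbound := measureReal_exists_lt_sum_mul_min_sub_min_le (iIndepFun_rademacherSign κ)
    hasSubgaussianMGF_rademacherSign (fun i σ => (abs_rademacherSign (σ i)).le) hr hk
    (fun i => (hz i).1.2) (fun i => (hz i).2.2) (η := δ / 4) (by linarith [hδ.1])
    (by linarith [hδ.2]) hS
  refine (ENNReal.le_ofReal_iff_toReal_le (measure_ne_top _ _) (by linarith [hδ.1])).2 ?_
  refine (measureReal_mono ?_ (measure_ne_top _ _)).trans (hbound.trans_eq (by ring))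
  rintro σ ⟨w, hw, hσ⟩
  refine ⟨w, hw, ?_⟩
  simp only [winnowLoss_eq_sub_min r w (hz _).1.1, winnowLoss_eq_sub_min r w (hz _).2.1,
    sub_sub_sub_cancel_left] at hσ
  refine lt_of_le_of_lt ?_ hσ
  rw [show 2 / (δ / 4) = 8 / δ by ring, Nat.cast_succ]
  nlinarith [Real.sqrt_nonneg (Fintype.card κ * (r * k))]

theorem measure_exists_winnowLoss_add_lt_integral_le [Nontrivial α] [Nonempty κ] (hr : 0 ≤ r)
    (hk : 0 ≤ k) (hrk : r * k ≠ 0) {δ : ℝ} (hδ : δ ∈ Set.Ioo (0 : ℝ) 1)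
    (hD : ∀ᵐ p ∂D, IsPositiveExample p) :
    (Measure.pi fun _ : κ => D) {S | ∃ w ∈ nonnegWeights α k,
      (∑ i, winnowLoss (r - 1 / 2) w (S i)) / Fintype.card κ +
        200 * √(r * k * (Real.log (Fintype.card α) * Real.log (3 * Fintype.card κ) ^ 3 +
          Real.log (1 / δ)) / Fintype.card κ) < ∫ p, winnowLoss (r - 1 / 2) w p ∂D} ≤
      ENNReal.ofReal δ := by
  set Q := Real.log (Fintype.card α) * Real.log (3 * Fintype.card κ) ^ 3 + Real.log (1 / δ)
  have hQ : 1 / 2 ≤ Q :=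
    half_le_log_mul_log_pow_add_log Fintype.one_lt_card Fintype.card_ne_zero hδ
  have hn : (0 : ℝ) < Fintype.card κ := mod_cast Fintype.card_pos
  have hrk_pos : 0 < r * k := (mul_nonneg hr hk).lt_of_ne' hrk
  have hscale : Fintype.card κ * (200 * √(r * k * Q / Fintype.card κ) / 2) =
      100 * (√(Fintype.card κ * (r * k)) * √Q) := by
    rw [← Real.sqrt_mul (by positivity), mul_assoc (Fintype.card κ : ℝ), ← mul_sqrt_div_self hn.le]
    ring
  have hvar : 8 * (r * k) ≤ Fintype.card κ * (200 * √(r * k * Q / Fintype.card κ)) ^ 2 := by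
    rw [mul_pow, Real.sq_sqrt (by positivity), mul_left_comm (Fintype.card κ : ℝ),
      mul_div_cancel₀ _ hn.ne']
    linarith [mul_le_mul_of_nonneg_left hQ hrk_pos.le]
  have hpairs : ∀ᵐ z ∂Measure.pi (fun _ : κ => D.prod D),
      ∀ i, IsPositiveExample (z i).1 ∧ IsPositiveExample (z i).2 :=
    ae_pi_forall ((Measure.quasiMeasurePreserving_fst.ae hD).and
      (Measure.quasiMeasurePreserving_snd.ae hD))
  refine (measure_exists_sum_div_add_lt_integral_le (fun w hw => memLp_winnowLoss hr hD hw)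
    (fun w hw => variance_winnowLoss_le hr hD hw) (by positivity) hvar
    (measurableSet_exists_lt_sum_winnowLoss_sub _ _ _) (η := ENNReal.ofReal (δ / 2)) ?_).trans_eq ?_
  · rw [hscale]
    exact hpairs.mono fun z hz => fairCoins_exists_lt_sum_winnowLoss_sub_le hr hk hδ hz
  · rw [← ENNReal.ofReal_ofNat 2, ← ENNReal.ofReal_mul two_pos.le, mul_div_cancel₀ δ two_ne_zero]

end Winnow

theorem stmt17_general {α κ : Type*} [Fintype α] [Nontrivial α] [Fintype κ] [Nonempty κ]
    {r k δ : ℝ} (hr : 0 ≤ r) (hk : 0 ≤ k) (hδ : δ ∈ Set.Ioo (0 : ℝ) 1)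
    (D : Measure ((α → ℝ) × ℝ)) [IsProbabilityMeasure D] (hD : ∀ᵐ p ∂D, IsPositiveExample p) :
    ENNReal.ofReal (1 - δ) ≤ (Measure.pi fun _ : κ => D) {S | ∀ w ∈ nonnegWeights α k,
      ∫ p, winnowLoss (r - 1 / 2) w p ∂D ≤
        (∑ i, winnowLoss (r - 1 / 2) w (S i)) / Fintype.card κ +
          200 * √(r * k * (Real.log (Fintype.card α) * Real.log (3 * Fintype.card κ) ^ 3 +
            Real.log (1 / δ)) / Fintype.card κ)} := by
  set Q := Real.log (Fintype.card α) * Real.log (3 * Fintype.card κ) ^ 3 + Real.log (1 / δ)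
  have hcompl : ENNReal.ofReal (1 - δ) = 1 - ENNReal.ofReal δ := by
    rw [ENNReal.ofReal_sub _ hδ.1.le, ENNReal.ofReal_one]
  refine hcompl.trans_le ((tsub_le_tsub_left ?_ 1).trans (one_sub_measure_compl_le _))
  by_cases hrk : r * k = 0
  · have hgood := ae_forall_winnowLoss_le_of_mul_eq_zero (κ := κ) hr hrk hD
    simp only [hrk, zero_mul, zero_div, Real.sqrt_zero, mul_zero, add_zero]
    exact (ae_iff.1 hgood).trans_le zero_le
  · refine (measure_mono fun S hS => ?_).trans
      (measure_exists_winnowLoss_add_lt_integral_le hr hk hrk hδ hD)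
    simpa only [Set.mem_compl_iff, Set.mem_ofPred_eq, not_forall, not_le, exists_prop] using hS

/-- Uniform convergence of the Winnow loss on all-positive-label distributions: there is a
universal constant `C` such that for any distribution on `[0,1]^d × {+1}`, with probability
`1−δ` over a sample of size `m`, every nonnegative `w` with `‖w‖₁ ≤ k` satisfies
`ℓ(w,D) ≤ ℓ̂(w) + C·sqrt(rk(ln(d)·ln³(3m) + ln(1/δ))/m)`. -/
theorem stmt17 : ∃ C : ℝ, 0 < C ∧
    ∀ (d m : ℕ) (k r θ δ : ℝ), 1 < d → 0 < m → 0 ≤ r → r ≤ k → θ = r - 1 / 2 →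
    δ ∈ Set.Ioo (0 : ℝ) 1 →
    ∀ D : Measure ((Fin d → ℝ) × ℝ), ∀ _ : IsProbabilityMeasure D,
    (∀ᵐ p ∂D, p.2 = 1 ∧ ∀ j, p.1 j ∈ Set.Icc (0 : ℝ) 1) →
    ENNReal.ofReal (1 - δ) ≤ (Measure.pi fun _ : Fin m => D)
      {S | ∀ w : Fin d → ℝ, (∀ j, 0 ≤ w j) → (∑ j, |w j|) ≤ k →
        ∫ p, max 0 (1 / 2 - p.2 * ((∑ j, w j * p.1 j) - θ)) ∂D ≤
          (∑ i, max 0 (1 / 2 - (S i).2 * ((∑ j, w j * (S i).1 j) - θ))) / m +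
          C * Real.sqrt (r * k * (Real.log d * (Real.log (3 * m)) ^ 3 +
            Real.log (1 / δ)) / m)} := by
  refine ⟨200, by norm_num, ?_⟩
  rintro d m k r _ δ hd hm hr hrk rfl hδ D _ hD
  have := Fin.nontrivial_iff_two_le.2 hd
  have := Fin.pos_iff_nonempty.1 hm
  refine (stmt17_general (κ := Fin m) hr (hr.trans hrk) hδ D hD).trans (measure_mono ?_)
  intro S hS w hw hwk
  simpa only [Fintype.card_fin] using! hS w ⟨hw, by simpa only [abs_of_nonneg (hw _)] using hwk⟩
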